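/- Let ν > 0 and let u : [0,∞) × S¹ → ℝ be continuous, with continuous derivatives ∂_t u, ∂_x u, ∂_x² u on [0,∞) × S¹, satisfying pointwise u_t + u·u_x − ν·u_xx = 0 and ∫_{S¹} u(t,x) dx = 0 for all t ≥ 0. Then for every t ≥ 0, ‖u(t,·)‖ ≤ e^{−νt}·‖u(0,·)‖, where ‖·‖ denotes the L²(S¹) norm. -/

import Mathlib

open Set

/-!
Energy method. Multiplying `u_t + g(u) u_x = ν u_xx` by `u` and integrating over a period `L`, the
advection term vanishes because `u g(u) u_x` is the derivative of a function of `u`, and integration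
by parts turns the diffusion term into `-ν ‖u_x‖²`; hence `d/dt ‖u‖² = -2ν ‖u_x‖²`. A mean-zero
function vanishes somewhere, so the fundamental theorem of calculus and Cauchy–Schwarz bound it
pointwise by `√L ‖u_x‖`, which gives `‖u‖ ≤ L ‖u_x‖`. Grönwall's inequality then yields decay at
rate `ν / L²`, and Burgers' equation is the case `g(u) = u`, `L = 1`.
-/

open MeasureTheory
open scoped Interval Topology

theorem sq_integral_le_measureReal_mul_integral_sq {α : Type*} {m : MeasurableSpace α}
    {μ : Measure α} [IsFiniteMeasure μ] {f : α → ℝ} (hf : MemLp f 2 μ) :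
    (∫ x, f x ∂μ) ^ 2 ≤ μ.real univ * ∫ x, f x ^ 2 ∂μ := by
  rcases eq_zero_or_neZero μ with rfl | _
  · simp
  have hμ : 0 < μ.real univ := measureReal_univ_pos
  -- Cauchy–Schwarz against the constant `1` is Jensen's inequality for the square.
  have jensen : (⨍ x, f x ∂μ) ^ 2 ≤ ⨍ x, f x ^ 2 ∂μ :=
    even_two.convexOn_pow.map_average_le (continuous_pow 2).continuousOn isClosed_univ
      (by simp) (hf.integrable one_le_two) hf.integrable_sq
  simp only [average_eq, smul_eq_mul] at jensen
  field_simp at jensen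
  exact jensen

section Poincare

variable {f f' : ℝ → ℝ} {a b : ℝ}

theorem sq_le_mul_integral_sq_deriv_of_eq_zero (hf : ∀ x ∈ Icc a b, HasDerivAt f (f' x) x)
    (hf' : ContinuousOn f' (Icc a b)) {c x : ℝ} (hc : c ∈ Icc a b) (hfc : f c = 0)
    (hx : x ∈ Icc a b) : f x ^ 2 ≤ (b - a) * ∫ y in a..b, f' y ^ 2 := by
  have hab : a ≤ b := hc.1.trans hc.2
  have hsub : uIcc c x ⊆ Icc a b := uIcc_subset_Icc hc hx
  have hsub' : Ι c x ⊆ Ioc a b := Ioc_subset_Ioc (le_min hc.1 hx.1) (max_le hc.2 hx.2)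
  have hint : IntegrableOn (fun y => f' y ^ 2) (Ioc a b) :=
    ((hf'.pow 2).integrableOn_Icc).mono_set Ioc_subset_Icc_self
  have hmem : MemLp f' 2 (volume.restrict (Ι c x)) :=
    (memLp_two_iff_integrable_sq ((hf'.mono (hsub'.trans Ioc_subset_Icc_self)).aestronglyMeasurable
      measurableSet_uIoc)).2 (hint.mono_set hsub')
  have : IsFiniteMeasure (volume.restrict (Ι c x)) := inferInstanceAs
    (IsFiniteMeasure (volume.restrict (Ioc (min c x) (max c x))))
  have ftc : ∫ y in c..x, f' y = f x := by
    rw [intervalIntegral.integral_eq_sub_of_hasDerivAt (fun y hy => hf y (hsub hy))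
      (hf'.mono hsub).intervalIntegrable, hfc, sub_zero]
  calc f x ^ 2 = (∫ y in Ι c x, f' y) ^ 2 := by
        rw [← ftc, ← sq_abs, intervalIntegral.abs_intervalIntegral_eq, sq_abs]
    _ ≤ volume.real (Ι c x) * ∫ y in Ι c x, f' y ^ 2 := by
        simpa using sq_integral_le_measureReal_mul_integral_sq hmem
    _ ≤ volume.real (Ioc a b) * ∫ y in Ioc a b, f' y ^ 2 := by
        gcongr
        · simp
        · exact ae_of_all _ fun y => sq_nonneg _
    _ = (b - a) * ∫ y in a..b, f' y ^ 2 := by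
        rw [Real.volume_real_Ioc_of_le hab, intervalIntegral.integral_of_le hab]

theorem integral_sq_le_sq_mul_integral_sq_deriv (hab : a ≤ b)
    (hf : ∀ x ∈ Icc a b, HasDerivAt f (f' x) x) (hf' : ContinuousOn f' (Icc a b))
    (hmean : ∫ x in a..b, f x = 0) :
    ∫ x in a..b, f x ^ 2 ≤ (b - a) ^ 2 * ∫ x in a..b, f' x ^ 2 := by
  rcases hab.eq_or_lt with rfl | hlt
  · simp
  have hcont : ContinuousOn f (uIcc a b) := by
    rw [uIcc_of_le hab]
    exact HasDerivAt.continuousOn hf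
  obtain ⟨c, hc, hfc⟩ : ∃ c ∈ uIoo a b, f c = 0 := by
    simpa [interval_average_eq, hmean] using exists_eq_interval_average hlt.ne hcont
  have hc : c ∈ Icc a b := uIcc_of_le hab ▸ uIoo_subset_uIcc_self hc
  calc ∫ x in a..b, f x ^ 2
      ≤ ∫ _ in a..b, (b - a) * ∫ y in a..b, f' y ^ 2 :=
        intervalIntegral.integral_mono_on hab (hcont.pow 2).intervalIntegrable
          intervalIntegrable_const
          fun x hx => sq_le_mul_integral_sq_deriv_of_eq_zero hf hf' hc hfc hx
    _ = (b - a) ^ 2 * ∫ x in a..b, f' x ^ 2 := by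
        rw [intervalIntegral.integral_const, smul_eq_mul]
        ring

end Poincare

theorem continuousOn_intervalIntegral_of_continuousOn {X E : Type*} [TopologicalSpace X]
    [NormedAddCommGroup E] [NormedSpace ℝ E] {μ : Measure ℝ} [IsLocallyFiniteMeasure μ]
    [NullSingletonClass μ] {F : X → ℝ → E} {s : Set X}
    (hF : ContinuousOn F.uncurry (s ×ˢ univ)) (a b : ℝ) :
    ContinuousOn (fun t => ∫ x in a..b, F t x ∂μ) s := by
  rw [continuousOn_iff_continuous_domRestrict]
  refine intervalIntegral.continuous_parametric_intervalIntegral_of_continuous'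
    (f := fun (t : s) x => F t x) ?_ a b
  exact hF.comp_continuous (f := fun p : s × ℝ => ((p.1 : X), p.2)) (by fun_prop)
    fun p => ⟨p.1.2, mem_univ _⟩

theorem hasDerivAt_intervalIntegral_of_continuousOn {𝕜 E : Type*} [RCLike 𝕜]
    [NormedAddCommGroup E] [NormedSpace ℝ E] [NormedSpace 𝕜 E] {μ : Measure ℝ}
    [IsLocallyFiniteMeasure μ] {F F' : 𝕜 → ℝ → E} {s : Set 𝕜} {t : 𝕜} {a b : ℝ} (hs : s ∈ 𝓝 t)
    (hF : ∀ r ∈ s, ContinuousOn (F r) (uIcc a b))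
    (hF' : ContinuousOn F'.uncurry (s ×ˢ uIcc a b))
    (hderiv : ∀ r ∈ s, ∀ x ∈ uIcc a b, HasDerivAt (fun r => F r x) (F' r x) r) :
    HasDerivAt (fun r => ∫ x in a..b, F r x ∂μ) (∫ x in a..b, F' t x ∂μ) t := by
  obtain ⟨K, hKt, hKs, hK⟩ := local_compact_nhds hs
  obtain ⟨C, hC⟩ := (hK.prod isCompact_uIcc).exists_bound_of_continuousOn
    (hF'.mono (prod_mono_left hKs))
  have hF't : ContinuousOn (F' t) (uIcc a b) :=
    hF'.comp (f := fun x => (t, x)) (by fun_prop) fun x hx => ⟨mem_of_mem_nhds hs, hx⟩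
  refine (intervalIntegral.hasDerivAt_integral_of_dominated_loc_of_deriv_le (bound := fun _ => C)
    hKt ?_ (hF t (mem_of_mem_nhds hs)).intervalIntegrable ?_ ?_ intervalIntegrable_const ?_).2
  · filter_upwards [hs] with r hr
    exact ((hF r hr).mono uIoc_subset_uIcc).aestronglyMeasurable measurableSet_uIoc
  · exact (hF't.mono uIoc_subset_uIcc).aestronglyMeasurable measurableSet_uIoc
  · exact ae_of_all _ fun x hx r hr => hC (r, x) ⟨hr, uIoc_subset_uIcc hx⟩
  · exact ae_of_all _ fun x hx r hr => hderiv r (hKs hr) x (uIoc_subset_uIcc hx)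

theorem le_exp_mul_of_deriv_le_mul {f f' : ℝ → ℝ} {K a : ℝ} (hf : ContinuousOn f (Ici a))
    (hf' : ∀ t ∈ Ioi a, HasDerivAt f (f' t) t) (hle : ∀ t ∈ Ioi a, f' t ≤ K * f t) {t : ℝ}
    (ht : t ∈ Ici a) : f t ≤ Real.exp (K * (t - a)) * f a := by
  have hderiv : ∀ s ∈ Ioi a, HasDerivAt (fun s => Real.exp (-(K * (s - a))) * f s)
      (Real.exp (-(K * (s - a))) * (f' s - K * f s)) s := fun s hs => by
    have hexp : HasDerivAt (fun s => Real.exp (-(K * (s - a))))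
        (Real.exp (-(K * (s - a))) * -(K * 1)) s :=
      (((hasDerivAt_id s).sub_const a).const_mul K).neg.exp
    exact (hexp.mul (hf' s hs)).congr_deriv (by ring)
  have hanti : AntitoneOn (fun s => Real.exp (-(K * (s - a))) * f s) (Ici a) := by
    refine antitoneOn_of_hasDerivWithinAt_nonpos (convex_Ici a) (by fun_prop)
      (f' := fun s => Real.exp (-(K * (s - a))) * (f' s - K * f s)) ?_ ?_ <;>
      rw [interior_Ici]
    · exact fun s hs => (hderiv s hs).hasDerivWithinAt
    · exact fun s hs => mul_nonpos_of_nonneg_of_nonpos (Real.exp_pos _).le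
        (sub_nonpos.2 (hle s hs))
  have hweighted : Real.exp (-(K * (t - a))) * f t ≤ f a := by
    simpa using hanti self_mem_Ici ht ht
  rwa [Real.exp_neg, inv_mul_le_iff₀ (Real.exp_pos _)] at hweighted

theorem periodic_deriv {𝕜 E : Type*} [NontriviallyNormedField 𝕜] [NormedAddCommGroup E]
    [NormedSpace 𝕜 E] {f : 𝕜 → E} {c : 𝕜} (hf : Function.Periodic f c) :
    Function.Periodic (deriv f) c := fun x => by
  rw [← deriv_comp_add_const, hf.funext]

theorem contDiff_two_of_continuous_deriv_deriv {𝕜 E : Type*} [NontriviallyNormedField 𝕜]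
    [NormedAddCommGroup E] [NormedSpace 𝕜 E] {f : 𝕜 → E} (hf : Differentiable 𝕜 f)
    (hf' : Differentiable 𝕜 (deriv f)) (hf'' : Continuous (deriv (deriv f))) :
    ContDiff 𝕜 2 f := by
  rw [show (2 : WithTop ℕ∞) = 1 + 1 by norm_num, contDiff_succ_iff_deriv, contDiff_one_iff_deriv]
  simp [*]

theorem integral_mul_diffusion_sub_advection {v g : ℝ → ℝ} {L : ℝ}
    (hv : ContDiff ℝ 2 v) (hper : Function.Periodic v L) (hg : Continuous g) (ν a : ℝ) :
    ∫ x in a..a + L, v x * (ν * deriv (deriv v) x - g (v x) * deriv v x) =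
      -ν * ∫ x in a..a + L, deriv v x ^ 2 := by
  have hv₁ : ContDiff ℝ 1 (deriv v) := hv.deriv'
  have hc₁ : Continuous (deriv v) := hv₁.continuous
  have hv₂ : Continuous (deriv (deriv v)) := hv₁.continuous_deriv_one
  have hd : ∀ x, HasDerivAt v (deriv v x) x := fun x => (hv.differentiable two_ne_zero x).hasDerivAt
  have hd₁ : ∀ x, HasDerivAt (deriv v) (deriv (deriv v) x) x := fun x =>
    (hv₁.differentiable one_ne_zero x).hasDerivAt
  have diffusion : ∫ x in a..a + L, v x * deriv (deriv v) x =
      -∫ x in a..a + L, deriv v x * deriv v x := by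
    rw [intervalIntegral.integral_mul_deriv_eq_deriv_mul (fun x _ => hd x) (fun x _ => hd₁ x)
      (hc₁.intervalIntegrable _ _) (hv₂.intervalIntegrable _ _), hper,
      periodic_deriv hper, sub_self, zero_sub]
  have advection : ∫ x in a..a + L, v x * g (v x) * deriv v x = 0 := by
    have := intervalIntegral.integral_comp_mul_deriv (a := a) (b := a + L) (fun x _ => hd x)
      hc₁.continuousOn (continuous_id.mul hg)
    rwa [hper, intervalIntegral.integral_same] at this
  have hv₀ : Continuous v := hv.continuous
  calc ∫ x in a..a + L, v x * (ν * deriv (deriv v) x - g (v x) * deriv v x)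
      = ∫ x in a..a + L, (ν * (v x * deriv (deriv v) x) - v x * g (v x) * deriv v x) := by
        congr! 2; ring
    _ = ν * (∫ x in a..a + L, v x * deriv (deriv v) x) -
          ∫ x in a..a + L, v x * g (v x) * deriv v x := by
        rw [intervalIntegral.integral_sub, intervalIntegral.integral_const_mul] <;>
          exact Continuous.intervalIntegrable (by fun_prop) _ _
    _ = -ν * ∫ x in a..a + L, deriv v x ^ 2 := by
        rw [diffusion, advection]
        simp only [pow_two]
        ring

theorem hasDerivAt_integral_sq {u : ℝ → ℝ → ℝ} {s : Set ℝ} {t a b : ℝ} (hs : s ∈ 𝓝 t)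
    (hu : ContinuousOn (fun p : ℝ × ℝ => u p.1 p.2) (s ×ˢ uIcc a b))
    (hu_diff : ∀ r ∈ s, ∀ x ∈ uIcc a b, DifferentiableAt ℝ (fun r => u r x) r)
    (hu_t : ContinuousOn (fun p : ℝ × ℝ => deriv (fun r => u r p.2) p.1) (s ×ˢ uIcc a b)) :
    HasDerivAt (fun r => ∫ x in a..b, u r x ^ 2)
      (2 * ∫ x in a..b, u t x * deriv (fun r => u r x) t) t := by
  rw [← intervalIntegral.integral_const_mul]
  exact hasDerivAt_intervalIntegral_of_continuousOn hs
    (F' := fun r x => 2 * (u r x * deriv (fun r => u r x) r))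
    (fun r hr => (hu.comp (f := fun x => (r, x)) (by fun_prop) fun x hx => ⟨hr, hx⟩).pow 2)
    (continuousOn_const.mul (hu.mul hu_t))
    fun r hr x hx => ((hu_diff r hr x hx).hasDerivAt.fun_pow 2).congr_deriv (by norm_num; ring)

theorem hasDerivAt_integral_sq_of_advection_diffusion {u : ℝ → ℝ → ℝ} {g : ℝ → ℝ} {s : Set ℝ}
    {ν L t a : ℝ} (hs : s ∈ 𝓝 t)
    (hu : ContinuousOn (fun p : ℝ × ℝ => u p.1 p.2) (s ×ˢ uIcc a (a + L)))
    (hu_diff : ∀ r ∈ s, ∀ x ∈ uIcc a (a + L), DifferentiableAt ℝ (fun r => u r x) r)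
    (hu_t : ContinuousOn (fun p : ℝ × ℝ => deriv (fun r => u r p.2) p.1) (s ×ˢ uIcc a (a + L)))
    (hper : Function.Periodic (u t) L) (hut : ContDiff ℝ 2 (u t)) (hg : Continuous g)
    (heq : ∀ x : ℝ,
      deriv (fun r => u r x) t + g (u t x) * deriv (u t) x - ν * deriv (deriv (u t)) x = 0) :
    HasDerivAt (fun r => ∫ x in a..a + L, u r x ^ 2)
      (-(2 * ν) * ∫ x in a..a + L, deriv (u t) x ^ 2) t := by
  have u_t_eq : ∀ x, deriv (fun r => u r x) t =
      ν * deriv (deriv (u t)) x - g (u t x) * deriv (u t) x := fun x => by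
    linear_combination heq x
  refine (hasDerivAt_integral_sq hs hu hu_diff hu_t).congr_deriv ?_
  simp only [u_t_eq, integral_mul_diffusion_sub_advection hut hper hg]
  ring

theorem stmt_7_general {ν L : ℝ} (hν : 0 ≤ ν) (hL : 0 < L) {g : ℝ → ℝ} (hg : Continuous g)
    {u : ℝ → ℝ → ℝ} (h_per : ∀ t ∈ Ioi (0 : ℝ), Function.Periodic (u t) L)
    (h_cont : ContinuousOn (fun p : ℝ × ℝ => u p.1 p.2) (Ici 0 ×ˢ univ))
    (h_t : ∀ x : ℝ, ∀ t ∈ Ioi (0 : ℝ), DifferentiableAt ℝ (fun s => u s x) t)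
    (h_t_cont : ContinuousOn (fun p : ℝ × ℝ => deriv (fun s => u s p.2) p.1) (Ioi 0 ×ˢ univ))
    (h_x : ∀ t ∈ Ioi (0 : ℝ), ContDiff ℝ 2 (u t))
    (heq : ∀ t ∈ Ioi (0 : ℝ), ∀ x : ℝ,
      deriv (fun s => u s x) t + g (u t x) * deriv (u t) x - ν * deriv (deriv (u t)) x = 0)
    (hmean : ∀ t ∈ Ioi (0 : ℝ), ∫ x in (0 : ℝ)..L, u t x = 0) {t : ℝ} (ht : t ∈ Ici 0) :
    √(∫ x in (0 : ℝ)..L, u t x ^ 2) ≤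
      Real.exp (-(ν / L ^ 2) * t) * √(∫ x in (0 : ℝ)..L, u 0 x ^ 2) := by
  have energy_identity : ∀ s ∈ Ioi (0 : ℝ), HasDerivAt (fun s => ∫ x in (0 : ℝ)..L, u s x ^ 2)
      (-(2 * ν) * ∫ x in (0 : ℝ)..L, deriv (u s) x ^ 2) s := fun s hs => by
    simpa only [zero_add] using hasDerivAt_integral_sq_of_advection_diffusion (a := 0)
      (Ioi_mem_nhds hs) (h_cont.mono (prod_mono Ioi_subset_Ici_self (subset_univ _)))
      (fun r hr x _ => h_t x r hr) (h_t_cont.mono (prod_mono_right (subset_univ _)))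
      (h_per s hs) (h_x s hs) hg (heq s hs)
  have dissipation : ∀ s ∈ Ioi (0 : ℝ), -(2 * ν) * ∫ x in (0 : ℝ)..L, deriv (u s) x ^ 2 ≤
      -(2 * (ν / L ^ 2)) * ∫ x in (0 : ℝ)..L, u s x ^ 2 := fun s hs => by
    have poincare := integral_sq_le_sq_mul_integral_sq_deriv hL.le
      (fun x _ => ((h_x s hs).differentiable two_ne_zero x).hasDerivAt)
      ((h_x s hs).continuous_deriv one_le_two).continuousOn (hmean s hs)
    rw [sub_zero, ← div_le_iff₀' (by positivity)] at poincare
    calc _ ≤ -(2 * ν) * ((∫ x in (0 : ℝ)..L, u s x ^ 2) / L ^ 2) :=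
          mul_le_mul_of_nonpos_left poincare (by linarith)
      _ = _ := by ring
  have decay := le_exp_mul_of_deriv_le_mul
    (continuousOn_intervalIntegral_of_continuousOn (h_cont.pow 2) 0 L) energy_identity
    dissipation ht
  calc √(∫ x in (0 : ℝ)..L, u t x ^ 2)
      ≤ √(Real.exp (-(2 * (ν / L ^ 2)) * (t - 0)) * ∫ x in (0 : ℝ)..L, u 0 x ^ 2) :=
        Real.sqrt_le_sqrt decay
    _ = Real.exp (-(ν / L ^ 2) * t) * √(∫ x in (0 : ℝ)..L, u 0 x ^ 2) := by
        rw [Real.sqrt_mul (Real.exp_pos _).le, ← Real.exp_half]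
        ring_nf

/-- Exponential L² decay for the unforced periodic viscous Burgers equation (from the
proof of Lemma 10.2 of the paper): a classical mean-zero solution of
`u_t + u u_x − ν u_xx = 0` on `[0,∞) × S¹` (S¹ = ℝ/ℤ, functions 1-periodic in space)
satisfies `‖u(t)‖_{L²} ≤ e^{−νt} ‖u(0)‖_{L²}`. -/
theorem stmt_7 (ν : ℝ) (hν : 0 < ν) (u : ℝ → ℝ → ℝ)
    (h_per : ∀ t, Function.Periodic (u t) 1)
    (h_cont : ContinuousOn (fun p : ℝ × ℝ => u p.1 p.2) (Ici 0 ×ˢ univ))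
    (h_t : ∀ x : ℝ, ∀ t ∈ Ici (0:ℝ), DifferentiableAt ℝ (fun s => u s x) t)
    (h_t_cont : ContinuousOn (fun p : ℝ × ℝ => deriv (fun s => u s p.2) p.1)
      (Ici 0 ×ˢ univ))
    (h_x : ∀ t ∈ Ici (0:ℝ), Differentiable ℝ (u t) ∧ Differentiable ℝ (deriv (u t)))
    (h_x_cont : ContinuousOn (fun p : ℝ × ℝ => deriv (u p.1) p.2) (Ici 0 ×ˢ univ))
    (h_xx_cont : ContinuousOn (fun p : ℝ × ℝ => deriv (deriv (u p.1)) p.2)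
      (Ici 0 ×ˢ univ))
    (heq : ∀ t ∈ Ici (0:ℝ), ∀ x : ℝ,
      deriv (fun s => u s x) t + u t x * deriv (u t) x - ν * deriv (deriv (u t)) x = 0)
    (hmean : ∀ t ∈ Ici (0:ℝ), ∫ x in (0:ℝ)..1, u t x = 0) :
    ∀ t ∈ Ici (0:ℝ),
      Real.sqrt (∫ x in (0:ℝ)..1, (u t x) ^ 2) ≤
        Real.exp (-ν * t) * Real.sqrt (∫ x in (0:ℝ)..1, (u 0 x) ^ 2) := by
  have hsub : Ioi (0 : ℝ) ⊆ Ici 0 := Ioi_subset_Ici_self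
  have h_C2 : ∀ t ∈ Ioi (0 : ℝ), ContDiff ℝ 2 (u t) := fun t ht =>
    contDiff_two_of_continuous_deriv_deriv (h_x t (hsub ht)).1 (h_x t (hsub ht)).2
      (h_xx_cont.comp_continuous (f := fun x => (t, x)) (by fun_prop)
        fun x => ⟨hsub ht, mem_univ x⟩)
  intro t ht
  simpa using stmt_7_general hν.le one_pos continuous_id (fun t _ => h_per t) h_cont
    (fun x t ht => h_t x t (hsub ht)) (h_t_cont.mono (prod_mono_left hsub)) h_C2
    (fun t ht => heq t (hsub ht)) (fun t ht => hmean t (hsub ht)) ht
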